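/- Let n ≥ 4 be an integer, let 0 < κ₁, κ₂ < 1/2, and let ε > 0 be a sufficiently small constant. There exist a constant c₇ > 0 and Q₀ = Q₀(n, ε) such that for every integer Q > Q₀ and every rectangle E = I₁ × I₂ ⊆ [-1/2, 1/2]² with |I₁| = Q^{-κ₁}, |I₂| = Q^{-κ₂} and |x - y| > ε for all (x, y) ∈ E, the rectangle E contains at least c₇·Q^{n-κ₁-κ₂} algebraic integer points (α, β): that is, pairs of distinct real roots α ∈ I₁, β ∈ I₂ of a common monic polynomial P ∈ ℤ[t] of degree n, irreducible over ℚ, with all coefficients of absolute value at most Q. -/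

import Mathlib

open Polynomial

/-- `(α, β)` is an algebraic integer point of degree `n` and height at most `Q`:
`α` and `β` are distinct real roots of a common monic integer polynomial of degree `n`,
irreducible over `ℚ`, all of whose coefficients have absolute value at most `Q`. -/
def IsAlgIntPoint (n : ℕ) (Q : ℤ) (α β : ℝ) : Prop :=
  α ≠ β ∧ ∃ P : ℤ[X], P.Monic ∧ P.natDegree = n ∧
    Irreducible (P.map (algebraMap ℤ ℚ)) ∧
    (∀ j, |P.coeff j| ≤ Q) ∧
    Polynomial.aeval α P = 0 ∧ Polynomial.aeval β P = 0


lemma aux_root (F F' : ℝ → ℝ) (hF : ∀ t, HasDerivAt F (F' t) t) (σ m w r : ℝ) (hσ : σ ≠ 0)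
    (hr : 0 ≤ r) (hm : ∀ t ∈ Set.Icc (w - r) (w + r), m ≤ σ * F' t)
    (hw : |σ * F w| ≤ m * r) : ∃ t ∈ Set.Icc (w - r) (w + r), F t = 0 := by
  have hG : ∀ t, HasDerivAt (fun t => σ * F t) (σ * F' t) t := fun t => (hF t).const_mul σ
  have hc : Continuous (fun t => σ * F t) :=
    continuous_iff_continuousAt.2 fun t => (hG t).continuousAt
  have key : ∀ x ∈ Set.Icc (w - r) (w + r), ∀ y ∈ Set.Icc (w - r) (w + r), x ≤ y →
      m * (y - x) ≤ σ * F y - σ * F x :=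
    (convex_Icc (w - r) (w + r)).mul_sub_le_image_sub_of_le_deriv hc.continuousOn
      (fun t _ => (hG t).differentiableAt.differentiableWithinAt)
      (fun t ht => by rw [(hG t).deriv]; exact hm t (interior_subset ht))
  have h1 := key w ⟨by linarith, by linarith⟩ (w + r) ⟨by linarith, by linarith⟩ (by linarith)
  have h2 := key (w - r) ⟨by linarith, by linarith⟩ w ⟨by linarith, by linarith⟩ (by linarith)
  rw [abs_le] at hw
  have := intermediate_value_Icc (a := w - r) (b := w + r) (by linarith) hc.continuousOn
  obtain ⟨t, ht, h0⟩ := this (show (0:ℝ) ∈ _ from ⟨by nlinarith, by nlinarith⟩)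
  exact ⟨t, ht, (mul_eq_zero.1 h0).resolve_left hσ⟩

lemma aux_lattice (w₁ w₂ U V : ℝ) (h : w₁ ≠ w₂) (h1 : |w₁| ≤ 1) (h2 : |w₂| ≤ 1) :
    ∃ a₀ a₁ : ℤ, |(4 * a₀ + 2 : ℝ) + 2 * a₁ * w₁ - U| ≤ 5 ∧
      |(4 * a₀ + 2 : ℝ) + 2 * a₁ * w₂ - V| ≤ 5 := by
  have hne : w₁ - w₂ ≠ 0 := sub_ne_zero.2 h
  obtain ⟨x, hx⟩ : ∃ x, x = (U - V) / (w₁ - w₂) := ⟨_, rfl⟩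
  obtain ⟨y, hy⟩ : ∃ y, y = U - x * w₁ := ⟨_, rfl⟩
  have hU : U = y + x * w₁ := by rw [hy]; ring
  have hV : V = y + x * w₂ := by rw [hy, hx]; field_simp; ring
  refine ⟨⌊y / 4⌋, ⌊x / 2⌋, ?_, ?_⟩
  all_goals
    have := Int.floor_le (y / 4)
    have := Int.lt_floor_add_one (y / 4)
    have := Int.floor_le (x / 2)
    have := Int.lt_floor_add_one (x / 2)
    have e1 : |(4 * ⌊y / 4⌋ + 2 : ℝ) - y| ≤ 2 := abs_le.2 ⟨by linarith, by linarith⟩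
    have e2 : |(2 * ⌊x / 2⌋ : ℝ) - x| ≤ 2 := abs_le.2 ⟨by linarith, by linarith⟩
  · have e3 : |((2 * ⌊x / 2⌋ : ℝ) - x) * w₁| ≤ 2 * 1 := by
      rw [abs_mul]; exact mul_le_mul e2 h1 (abs_nonneg _) (by norm_num)
    rw [abs_le] at *
    constructor <;> linarith [e1.1, e1.2, e3.1, e3.2]
  · have e3 : |((2 * ⌊x / 2⌋ : ℝ) - x) * w₂| ≤ 2 * 1 := by
      rw [abs_mul]; exact mul_le_mul e2 h2 (abs_nonneg _) (by norm_num)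
    rw [abs_le] at *
    constructor <;> linarith [e1.1, e1.2, e3.1, e3.2]

/-- monic polynomial with prescribed lower coefficients -/
noncomputable def polyOf (n : ℕ) (c : ℕ → ℤ) : ℤ[X] :=
  X ^ n + ∑ i ∈ Finset.range n, C (c i) * X ^ i

lemma polyOf_deg (n : ℕ) (c : ℕ → ℤ) :
    (∑ i ∈ Finset.range n, C (c i) * X ^ i : ℤ[X]).degree < n := by
  rw [degree_lt_iff_coeff_zero]
  intro m hm
  simp only [finsetSum_coeff, coeff_C_mul_X_pow]
  refine Finset.sum_eq_zero fun i hi => ?_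
  rw [if_neg]; have := Finset.mem_range.1 hi; omega

lemma polyOf_monic (n : ℕ) (c : ℕ → ℤ) : (polyOf n c).Monic :=
  monic_X_pow_add (polyOf_deg n c)

lemma polyOf_natDegree (n : ℕ) (c : ℕ → ℤ) : (polyOf n c).natDegree = n := by
  refine natDegree_eq_of_degree_eq_some ?_
  unfold polyOf
  rw [degree_add_eq_left_of_degree_lt] <;> rw [degree_X_pow]
  exact polyOf_deg n c

lemma polyOf_coeff (n : ℕ) (c : ℕ → ℤ) (i : ℕ) :
    (polyOf n c).coeff i = if i < n then c i else if i = n then 1 else 0 := by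
  unfold polyOf
  rw [coeff_add, coeff_X_pow, finsetSum_coeff]
  simp only [coeff_C_mul_X_pow, Finset.sum_ite_eq, Finset.mem_range]
  split_ifs <;> omega

lemma polyOf_irr (n : ℕ) (hn : 1 ≤ n) (c : ℕ → ℤ) (h : ∀ i < n, 2 ∣ c i) (h0 : c 0 % 4 = 2) :
    Irreducible ((polyOf n c).map (algebraMap ℤ ℚ)) := by
  have hm := polyOf_monic n c
  refine (IsPrimitive.Int.irreducible_iff_irreducible_map_cast hm.isPrimitive).1 ?_
  have hp : (Ideal.span {(2:ℤ)}).IsPrime :=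
    (Ideal.span_singleton_prime (by norm_num)).2 Int.prime_two
  refine IsEisensteinAt.irreducible (𝓟 := Ideal.span {(2:ℤ)}) ?_ hp hm.isPrimitive
    (by rw [polyOf_natDegree]; omega)
  constructor
  · rw [hm.leadingCoeff, Ideal.mem_span_singleton]; norm_num
  · intro i hi
    rw [polyOf_natDegree] at hi
    rw [polyOf_coeff, if_pos hi, Ideal.mem_span_singleton]; exact h i hi
  · rw [polyOf_coeff, if_pos (by omega), Ideal.span_singleton_pow, Ideal.mem_span_singleton]
    omega

lemma aux_analytic (ε Q A w₁ w₂ a₁ a₀ r : ℝ) (hε : 0 < ε) (hε1 : ε ≤ 1) (hQ : 100 ≤ Q)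
    (hA : Q / 2 - 2 ≤ A) (hA' : A ≤ Q / 2)
    (R R' : ℝ → ℝ) (hR : ∀ t, HasDerivAt R (R' t) t)
    (hRb : ∀ t, |t| ≤ 1 → |R t| ≤ ε ^ 2 / 100 * Q) (hRb' : ∀ t, |t| ≤ 1 → |R' t| ≤ ε ^ 2 / 100 * Q)
    (hw₁ : |w₁| ≤ 1 / 2) (hw₂ : |w₂| ≤ 1 / 2) (hw : ε < |w₁ - w₂|)
    (hu : |A * w₁ ^ 2 + a₁ * w₁ + a₀ + R w₁| ≤ ε ^ 2 / 100 * Q)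
    (hv : |A * w₂ ^ 2 + a₁ * w₂ + a₀ + R w₂| ≤ ε ^ 2 / 100 * Q)
    (hr : 0 ≤ r) (hrε : 2 * r ≤ ε ^ 2 / 10)
    (hur : |A * w₁ ^ 2 + a₁ * w₁ + a₀ + R w₁| ≤ ε ^ 2 * Q / 20 * r) :
    (∃ t ∈ Set.Icc (w₁ - r) (w₁ + r), A * t ^ 2 + a₁ * t + a₀ + R t = 0) ∧
    |a₁| ≤ Q ∧ |a₀| ≤ Q := by
  obtain ⟨d, hd⟩ : ∃ d, d = w₁ - w₂ := ⟨_, rfl⟩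
  obtain ⟨e₁, he₁⟩ : ∃ e₁, e₁ = a₁ + A * (w₁ + w₂) := ⟨_, rfl⟩
  obtain ⟨τ, hτ⟩ : ∃ τ, τ = ε ^ 2 / 100 * Q := ⟨_, rfl⟩
  rw [← hτ] at hu hv hRb hRb'
  have hR1 := hRb w₁ (by linarith)
  have hR2 := hRb w₂ (by linarith)
  rw [← hd] at hw
  have hd1 : |d| ≤ 1 := by
    rw [hd]; rw [abs_le] at *; constructor <;> linarith [hw₁.1, hw₂.1, hw₁.2, hw₂.2]
  have hsq : ε ^ 2 ≤ d ^ 2 := by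
    rw [← sq_abs d]; exact pow_le_pow_left₀ hε.le hw.le 2
  have hε2 : ε ^ 2 ≤ ε := by nlinarith
  have hε0 : 0 < ε ^ 2 := by positivity
  have hdE : |e₁ * d| ≤ 4 * τ := by
    have : e₁ * d = (A * w₁ ^ 2 + a₁ * w₁ + a₀ + R w₁) - (A * w₂ ^ 2 + a₁ * w₂ + a₀ + R w₂)
      - R w₁ + R w₂ := by rw [he₁, hd]; ring
    rw [this, abs_le]; rw [abs_le] at hu hv hR1 hR2
    constructor <;> linarith [hu.1, hu.2, hv.1, hv.2, hR1.1, hR1.2, hR2.1, hR2.2]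
  have hA0 : 0 ≤ A := by linarith
  have hτ1 : τ ≤ ε * Q / 100 := by rw [hτ]; nlinarith
  have hτ2 : τ ≤ Q / 100 := by nlinarith
  have he : |e₁| ≤ Q / 20 := by
    rw [abs_mul] at hdE
    have : |e₁| * ε ≤ |e₁| * |d| := by gcongr
    have h3 : |e₁| * ε ≤ (Q / 20) * ε := by nlinarith
    exact le_of_mul_le_mul_right h3 hε
  refine ⟨?_, ?_, ?_⟩
  · have hF : ∀ t, HasDerivAt (fun t => A * t ^ 2 + a₁ * t + a₀ + R t)
        (A * (2 * t) + a₁ + R' t) t := by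
      intro t
      have := ((((hasDerivAt_pow 2 t).const_mul A).add ((hasDerivAt_id t).const_mul a₁)).add_const
        a₀).add (hR t)
      exact HasDerivAt.congr_deriv this (by norm_num)
    refine aux_root _ _ hF d (ε ^ 2 * Q / 20) w₁ r (by rintro rfl; simp at hw; linarith) hr ?_ ?_
    · intro t ht
      have htr : |t - w₁| ≤ r := abs_le.2 ⟨by linarith [ht.1], by linarith [ht.2]⟩
      have ht1 : |t| ≤ 1 := by
        have hr' : r ≤ 1 / 2 := by linarith
        rw [abs_le] at htr hw₁ ⊢; constructor <;> linarith [htr.1, hw₁.1, htr.2, hw₁.2]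
      have h1 : d * (A * (2 * t) + a₁ + R' t)
        = A * (d ^ 2 + 2 * ((t - w₁) * d)) + e₁ * d + d * R' t := by rw [he₁, hd]; ring
      have h2 : |(t - w₁) * d| ≤ r := by
        rw [abs_mul]
        calc _ ≤ r * 1 := mul_le_mul htr hd1 (abs_nonneg _) hr
          _ = r := mul_one r
      have h3 : |d * R' t| ≤ τ := by
        rw [abs_mul]
        calc _ ≤ 1 * τ := mul_le_mul hd1 (hRb' t ht1) (abs_nonneg _) zero_le_one
          _ = τ := one_mul τ
      have h4 : ε ^ 2 / 2 ≤ d ^ 2 + 2 * ((t - w₁) * d) := by linarith [(abs_le.1 h2).1]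
      have h5 : (Q / 4) * (ε ^ 2 / 2) ≤ A * (d ^ 2 + 2 * ((t - w₁) * d)) := by
        apply mul_le_mul _ h4 (by positivity) hA0; linarith
      rw [h1]
      have h6 := (abs_le.1 h3).1
      have h7 := (abs_le.1 hdE).1
      have h8 : 0 < ε ^ 2 * Q := by positivity
      rw [hτ] at h6 h7
      linarith
    · rw [abs_mul]
      refine le_trans ?_ hur
      exact mul_le_of_le_one_left (abs_nonneg _) hd1
  · have h1 : a₁ = e₁ - A * (w₁ + w₂) := by rw [he₁]; ring
    have h2 : |w₁ + w₂| ≤ 1 := by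
      rw [abs_le] at *; constructor <;> linarith [hw₁.1, hw₂.1, hw₁.2, hw₂.2]
    have h3 : |A * (w₁ + w₂)| ≤ Q / 2 := by
      rw [abs_mul, abs_of_nonneg hA0]; exact (mul_le_of_le_one_right hA0 h2).trans hA'
    rw [h1]
    linarith [abs_sub e₁ (A * (w₁ + w₂))]
  · have h1 : a₀ = (A * w₁ ^ 2 + a₁ * w₁ + a₀ + R w₁) - R w₁ - e₁ * w₁ + A * (w₁ * w₂) := by
      rw [he₁]; ring
    have h2 : |w₁ * w₂| ≤ 1 := by
      rw [abs_mul]; exact mul_le_one₀ (by linarith) (abs_nonneg _) (by linarith)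
    have h3 : |A * (w₁ * w₂)| ≤ Q / 2 := by
      rw [abs_mul, abs_of_nonneg hA0]; exact (mul_le_of_le_one_right hA0 h2).trans hA'
    have h4 : |e₁ * w₁| ≤ Q / 20 := by
      rw [abs_mul]; exact (mul_le_of_le_one_right (abs_nonneg _) (by linarith)).trans he
    rw [h1]
    rw [abs_le] at hu hR1 h3 h4 ⊢
    constructor <;> linarith [hu.1, hu.2, hR1.1, hR1.2, h3.1, h3.2, h4.1, h4.2]

lemma aux_R (k N : ℕ) (b : ℕ → ℕ) (hb : ∀ j, b j ≤ N) (T : ℝ)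
    (hT : ((k + 2 : ℕ) : ℝ) + 2 * ((k + 2 : ℕ) : ℝ) ^ 2 * N ≤ T) :
    ∃ R' : ℝ → ℝ,
      (∀ t, HasDerivAt (fun t : ℝ => t ^ (k + 2)
        + ∑ j ∈ Finset.range k, (2 * b j : ℝ) * t ^ (j + 2)) (R' t) t) ∧
      (∀ t, |t| ≤ 1 → |t ^ (k + 2) + ∑ j ∈ Finset.range k, (2 * b j : ℝ) * t ^ (j + 2)| ≤ T) ∧
      (∀ t, |t| ≤ 1 → |R' t| ≤ T) := by
  have hN : (0 : ℝ) ≤ N := Nat.cast_nonneg N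
  have hk : (0 : ℝ) ≤ k := Nat.cast_nonneg k
  have hbN : ∀ j, (b j : ℝ) ≤ N := fun j => by exact_mod_cast hb j
  push_cast at hT
  refine ⟨fun t => ((k + 2 : ℕ) : ℝ) * t ^ (k + 1)
    + ∑ j ∈ Finset.range k, (2 * b j : ℝ) * (((j + 2 : ℕ) : ℝ) * t ^ (j + 1)), ?_, ?_, ?_⟩
  · intro t
    refine (hasDerivAt_pow (k + 2) t).add ?_
    refine HasDerivAt.fun_sum fun j _ => ?_
    exact (hasDerivAt_pow (j + 2) t).const_mul _
  · intro t ht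
    have hp : ∀ m : ℕ, |t ^ m| ≤ 1 := fun m => by
      rw [abs_pow]; exact pow_le_one₀ (abs_nonneg _) ht
    have h1 : |∑ j ∈ Finset.range k, (2 * b j : ℝ) * t ^ (j + 2)| ≤ k * (2 * N) := by
      refine (Finset.abs_sum_le_sum_abs _ _).trans ?_
      refine (Finset.sum_le_card_nsmul _ _ (2 * N : ℝ) fun j _ => ?_).trans (by simp)
      rw [abs_mul, abs_of_nonneg (by positivity)]
      calc _ ≤ (2 * N : ℝ) * 1 :=
            mul_le_mul (by linarith [hbN j]) (hp _) (abs_nonneg _) (by positivity)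
        _ = _ := mul_one _
    have := abs_add_le (t ^ (k + 2)) (∑ j ∈ Finset.range k, (2 * b j : ℝ) * t ^ (j + 2))
    have := hp (k + 2)
    have h2 : (k : ℝ) * (2 * N) ≤ 2 * (k + 2) ^ 2 * N := by nlinarith [mul_nonneg hk hN, mul_nonneg (mul_nonneg hk hk) hN]
    linarith
  · intro t ht
    have hp : ∀ m : ℕ, |t ^ m| ≤ 1 := fun m => by
      rw [abs_pow]; exact pow_le_one₀ (abs_nonneg _) ht
    have h1 : |∑ j ∈ Finset.range k, (2 * b j : ℝ) * (((j + 2 : ℕ) : ℝ) * t ^ (j + 1))|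
        ≤ k * (2 * N * (k + 2)) := by
      refine (Finset.abs_sum_le_sum_abs _ _).trans ?_
      refine (Finset.sum_le_card_nsmul _ _ (2 * N * (k + 2) : ℝ) fun j hj => ?_).trans (by simp)
      have hj' : ((j + 2 : ℕ) : ℝ) ≤ k + 2 := by
        have := Finset.mem_range.1 hj
        have : j + 2 ≤ k + 2 := by omega
        exact_mod_cast this
      rw [abs_mul, abs_of_nonneg (by positivity : (0:ℝ) ≤ 2 * b j), abs_mul, Nat.abs_cast]
      have : ((j + 2 : ℕ) : ℝ) * |t ^ (j + 1)| ≤ (k + 2) * 1 :=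
        mul_le_mul hj' (hp _) (abs_nonneg _) (by positivity)
      rw [mul_one] at this
      exact mul_le_mul (by linarith [hbN j]) this (by positivity) (by positivity)
    have h3 := abs_add_le (((k + 2 : ℕ) : ℝ) * t ^ (k + 1))
      (∑ j ∈ Finset.range k, (2 * b j : ℝ) * (((j + 2 : ℕ) : ℝ) * t ^ (j + 1)))
    have h4 : |((k + 2 : ℕ) : ℝ) * t ^ (k + 1)| ≤ k + 2 := by
      rw [abs_mul, Nat.abs_cast]; push_cast
      exact mul_le_of_le_one_right (by positivity) (hp _)
    have h2 : (k : ℝ) * (2 * N * (k + 2)) ≤ 2 * (k + 2) ^ 2 * N := by nlinarith [mul_nonneg hk hN, mul_nonneg (mul_nonneg hk hk) hN]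
    linarith

/-- the coefficient function -/
def coefFn (A : ℤ) (b : ℕ → ℕ) (a₀ a₁ : ℤ) : ℕ → ℤ
  | 0 => 4 * a₀ + 2
  | 1 => 2 * a₁
  | (j + 2) => 2 * b j + if j = 0 then 2 * A else 0

lemma aux_eval (k : ℕ) (hk : 1 ≤ k) (A : ℤ) (b : ℕ → ℕ) (a₀ a₁ : ℤ) (t : ℝ) :
    aeval t (polyOf (k + 2) (coefFn A b a₀ a₁)) =
      (2 * A : ℝ) * t ^ 2 + (2 * a₁ : ℝ) * t + (4 * a₀ + 2 : ℝ) +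
      (t ^ (k + 2) + ∑ j ∈ Finset.range k, (2 * b j : ℝ) * t ^ (j + 2)) := by
  unfold polyOf
  rw [Finset.sum_range_succ', Finset.sum_range_succ']
  simp only [map_add, map_sum, map_mul, map_pow, aeval_X, aeval_C, coefFn]
  have : ∑ j ∈ Finset.range k, (algebraMap ℤ ℝ) (2 * (b j : ℤ) + if j = 0 then 2 * A else 0)
      * t ^ (j + 2) = ∑ j ∈ Finset.range k, (2 * b j : ℝ) * t ^ (j + 2) + 2 * A * t ^ 2 := by
    have h : ∑ j ∈ Finset.range k, (if j = 0 then (2 * A : ℝ) * t ^ 2 else 0) = 2 * A * t ^ 2 := by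
      rw [Finset.sum_ite_eq' , if_pos (Finset.mem_range.2 (by omega))]
    rw [← h, ← Finset.sum_add_distrib]
    refine Finset.sum_congr rfl fun j _ => ?_
    by_cases hj : j = 0
    · subst hj; simp; ring
    · simp [hj]
  have h2 : ∀ j, j + 1 + 1 = j + 2 := fun j => rfl
  simp only [map_add, map_mul] at this ⊢
  rw [show (∑ x ∈ Finset.range k, _) = _ from this]
  simp
  ring

lemma aux_build (k : ℕ) (hk : 1 ≤ k) (ε : ℝ) (hε : 0 < ε) (hε1 : ε ≤ 1) (Q N M₁ M₂ : ℕ)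
    (hQ : 100 ≤ Q) (w₁ w₂ r₁ r₂ : ℝ)
    (hN : ((k + 2 : ℕ) : ℝ) + 2 * ((k + 2 : ℕ) : ℝ) ^ 2 * N ≤ ε ^ 2 / 100 * Q)
    (hw₁ : |w₁| ≤ 1 / 2) (hw₂ : |w₂| ≤ 1 / 2) (hw : ε < |w₁ - w₂|)
    (hr₁ : 0 ≤ r₁) (hr₂ : 0 ≤ r₂) (hr₁' : 2 * r₁ ≤ ε ^ 2 / 10) (hr₂' : 2 * r₂ ≤ ε ^ 2 / 10)
    (hM₁ : (11 * M₁ + 5 : ℝ) ≤ ε ^ 2 * Q / 20 * r₁)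
    (hM₂ : (11 * M₂ + 5 : ℝ) ≤ ε ^ 2 * Q / 20 * r₂)
    (i j : ℕ) (hi : i ≤ M₁) (hj : j ≤ M₂) (b : ℕ → ℕ) (hb : ∀ j, b j ≤ N) :
    ∃ (a₀ a₁ : ℤ) (α β : ℝ),
      let P := polyOf (k + 2) (coefFn (Q / 4 : ℕ) b a₀ a₁)
      |aeval w₁ P - 11 * i| ≤ 5 ∧ |aeval w₂ P - 11 * j| ≤ 5 ∧
      α ∈ Set.Icc (w₁ - r₁) (w₁ + r₁) ∧ β ∈ Set.Icc (w₂ - r₂) (w₂ + r₂) ∧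
      aeval α P = 0 ∧ aeval β P = 0 ∧ Irreducible (P.map (algebraMap ℤ ℚ)) ∧
      ∀ l, |P.coeff l| ≤ (Q : ℤ) := by
  obtain ⟨R', hR, hRb, hRb'⟩ := aux_R k N b hb _ hN
  set R : ℝ → ℝ := fun t : ℝ => t ^ (k + 2)
        + ∑ j ∈ Finset.range k, (2 * b j : ℝ) * t ^ (j + 2) with hRdef
  obtain ⟨A, hA⟩ : ∃ A : ℕ, A = Q / 4 := ⟨_, rfl⟩
  rw [← hA]
  have hA1 : (Q : ℝ) / 2 - 2 ≤ 2 * (A : ℝ) := by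
    have : Q ≤ 4 * A + 4 := by omega
    have : (Q : ℝ) ≤ 4 * A + 4 := by exact_mod_cast this
    linarith
  have hA2 : 2 * (A : ℝ) ≤ (Q : ℝ) / 2 := by
    have : 4 * A ≤ Q := by omega
    have : (4 * A : ℝ) ≤ Q := by exact_mod_cast this
    linarith
  have hne : w₁ ≠ w₂ := by rintro rfl; simp at hw; linarith
  obtain ⟨a₀, a₁, h1, h2⟩ := aux_lattice w₁ w₂ (11 * i - 2 * A * w₁ ^ 2 - R w₁)
    (11 * j - 2 * A * w₂ ^ 2 - R w₂) hne (by linarith) (by linarith)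
  have hev : ∀ t, aeval t (polyOf (k + 2) (coefFn A b a₀ a₁)) =
      (2 * A : ℝ) * t ^ 2 + (2 * a₁ : ℝ) * t + (4 * a₀ + 2 : ℝ) + R t := by
    intro t; rw [aux_eval k hk]; simp [hRdef]
  have hu : |(2 * A : ℝ) * w₁ ^ 2 + (2 * a₁ : ℝ) * w₁ + (4 * a₀ + 2 : ℝ) + R w₁ - 11 * i| ≤ 5 := by
    convert h1 using 2; ring
  have hv : |(2 * A : ℝ) * w₂ ^ 2 + (2 * a₁ : ℝ) * w₂ + (4 * a₀ + 2 : ℝ) + R w₂ - 11 * j| ≤ 5 := by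
    convert h2 using 2; ring
  have hi' : (i : ℝ) ≤ M₁ := by exact_mod_cast hi
  have hj' : (j : ℝ) ≤ M₂ := by exact_mod_cast hj
  have hi0 : (0 : ℝ) ≤ i := Nat.cast_nonneg i
  have hj0 : (0 : ℝ) ≤ j := Nat.cast_nonneg j
  have hQ' : (100 : ℝ) ≤ Q := by exact_mod_cast hQ
  have hε2 : ε ^ 2 ≤ 1 := pow_le_one₀ hε.le hε1
  have hu1 : |(2 * A : ℝ) * w₁ ^ 2 + (2 * a₁ : ℝ) * w₁ + (4 * a₀ + 2 : ℝ) + R w₁|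
      ≤ ε ^ 2 * Q / 20 * r₁ := by
    rw [abs_le] at hu ⊢; constructor <;> linarith [hu.1, hu.2]
  have hv1 : |(2 * A : ℝ) * w₂ ^ 2 + (2 * a₁ : ℝ) * w₂ + (4 * a₀ + 2 : ℝ) + R w₂|
      ≤ ε ^ 2 * Q / 20 * r₂ := by
    rw [abs_le] at hv ⊢; constructor <;> linarith [hv.1, hv.2]
  have hs : ∀ r : ℝ, 2 * r ≤ ε ^ 2 / 10 → ε ^ 2 * Q / 20 * r ≤ ε ^ 2 / 100 * Q := by
    intro r hr
    have h0 : 0 ≤ ε ^ 2 * Q / 20 := by positivity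
    have h3 : r ≤ 1 / 5 := by linarith
    calc ε ^ 2 * Q / 20 * r ≤ ε ^ 2 * Q / 20 * (1 / 5) := by gcongr
      _ = _ := by ring
  have hu2 := hu1.trans (hs r₁ hr₁')
  have hv2 := hv1.trans (hs r₂ hr₂')
  obtain ⟨⟨α, hα, hα0⟩, hc1, hc0⟩ := aux_analytic ε Q (2 * A) w₁ w₂ (2 * a₁) (4 * a₀ + 2) r₁ hε hε1
    hQ' hA1 hA2 R R' hR hRb hRb' hw₁ hw₂ hw hu2 hv2 hr₁ hr₁' hu1
  obtain ⟨⟨β, hβ, hβ0⟩, -, -⟩ := aux_analytic ε Q (2 * A) w₂ w₁ (2 * a₁) (4 * a₀ + 2) r₂ hε hε1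
    hQ' hA1 hA2 R R' hR hRb hRb' hw₂ hw₁ (by rwa [abs_sub_comm]) hv2 hu2 hr₂ hr₂' hv1
  refine ⟨a₀, a₁, α, β, ?_, ?_, hα, hβ, ?_, ?_, ?_, ?_⟩
  · rw [hev]; exact hu
  · rw [hev]; exact hv
  · rw [hev]; exact hα0
  · rw [hev]; exact hβ0
  · apply polyOf_irr _ (by omega)
    · intro l _
      match l with
      | 0 => simp only [coefFn]; omega
      | 1 => simp only [coefFn]; omega
      | (l + 2) => simp only [coefFn]; split_ifs <;> omega
    · simp only [coefFn]; omega
  · have hNQ : 8 * N ≤ Q := by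
      have hk0 : (0 : ℝ) ≤ k := Nat.cast_nonneg k
      have hN0 : (0 : ℝ) ≤ N := Nat.cast_nonneg N
      have e1 : (8 : ℝ) * N ≤ 2 * ((k + 2 : ℕ) : ℝ) ^ 2 * N := by
        have e0 : (4 : ℝ) ≤ ((k + 2 : ℕ) : ℝ) ^ 2 := by push_cast; nlinarith
        exact mul_le_mul_of_nonneg_right (by linarith) hN0
      have e2 : ε ^ 2 / 100 * Q ≤ Q := mul_le_of_le_one_left (by linarith) (by linarith)
      have e3 : (0 : ℝ) ≤ ((k + 2 : ℕ) : ℝ) := Nat.cast_nonneg _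
      have : (8 : ℝ) * N ≤ Q := by linarith
      exact_mod_cast this
    intro l
    rw [polyOf_coeff]
    split_ifs
    · match l with
      | 0 => simp only [coefFn]; exact_mod_cast hc0
      | 1 => simp only [coefFn]; exact_mod_cast hc1
      | (l + 2) =>
        simp only [coefFn]
        have := hb l
        rw [abs_of_nonneg (by positivity)]
        split_ifs <;> omega
    · simp; omega
    · simp

lemma aux_floor (x : ℝ) (hx : 1 ≤ x) : x / 2 ≤ (⌊x⌋₊ : ℝ) := by
  have h1 := Nat.lt_floor_add_one x
  have h2 : (1 : ℝ) ≤ (⌊x⌋₊ : ℝ) := by exact_mod_cast (Nat.one_le_floor_iff x).2 hx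
  linarith

lemma aux_rpow_big (κ B : ℝ) (hκ : κ < 1) : ∀ᶠ Q : ℕ in Filter.atTop, B ≤ (Q : ℝ) ^ (1 - κ) :=
  ((tendsto_rpow_atTop (by linarith : 0 < 1 - κ)).comp
    tendsto_natCast_atTop_atTop).eventually_ge_atTop B

lemma aux_rpow_small (κ B : ℝ) (hκ : 0 < κ) (hB : 0 < B) :
    ∀ᶠ Q : ℕ in Filter.atTop, (Q : ℝ) ^ (-κ) ≤ B :=
  ((tendsto_rpow_neg_atTop hκ).comp tendsto_natCast_atTop_atTop).eventually_le_const hB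

lemma aux_mid (a b c : ℝ) (hc : 0 ≤ c) (h : b - a = c)
    (hs : Set.Icc a b ⊆ Set.Icc (-(1/2) : ℝ) (1/2)) :
    |(a + b) / 2| ≤ 1 / 2 ∧ (a + b) / 2 ∈ Set.Icc a b ∧
      Set.Icc ((a + b) / 2 - c / 2) ((a + b) / 2 + c / 2) = Set.Icc a b := by
  have hm : (a + b) / 2 ∈ Set.Icc a b := ⟨by linarith, by linarith⟩
  refine ⟨abs_le.2 (hs hm), hm, ?_⟩
  congr 1 <;> linarith

lemma aux_grid (x : ℝ) (i j : ℕ) (hi : |x - 11 * i| ≤ 5) (hj : |x - 11 * j| ≤ 5) : i = j := by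
  rw [abs_le] at hi hj
  have h1 : (11 * i : ℝ) < 11 * j + 11 := by linarith [hi.1, hj.2]
  have h2 : (11 * j : ℝ) < 11 * i + 11 := by linarith [hj.1, hi.2]
  have h3 : 11 * i < 11 * j + 11 := by exact_mod_cast h1
  have h4 : 11 * j < 11 * i + 11 := by exact_mod_cast h2
  omega

lemma aux_minpoly (P : ℤ[X]) (hP : P.Monic) (hi : Irreducible (P.map (algebraMap ℤ ℚ))) (α : ℝ)
    (h : aeval α P = 0) : P.map (algebraMap ℤ ℚ) = minpoly ℚ α :=
  minpoly.eq_of_irreducible_of_monic hi (by rw [aeval_map_algebraMap]; exact h) (hP.map _)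

/-- For `n ≥ 4`, `0 < κ₁, κ₂ < 1/2` and `ε > 0`, there are `c₇ > 0` and `Q₀` such that
for every integer `Q > Q₀`, every rectangle `E = I₁ × I₂ ⊆ [-1/2, 1/2]²` with
`|I₁| = Q^{-κ₁}`, `|I₂| = Q^{-κ₂}`, staying away from the diagonal by `ε`, contains at least
`c₇·Q^{n-κ₁-κ₂}` algebraic integer points of degree `n` and height at most `Q`. -/
theorem algebraic_integer_points_in_rectangles (n : ℕ) (hn : 4 ≤ n)
    (κ₁ κ₂ : ℝ) (hκ₁ : 0 < κ₁) (hκ₁' : κ₁ < 1/2) (hκ₂ : 0 < κ₂) (hκ₂' : κ₂ < 1/2)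
    (ε : ℝ) (hε : 0 < ε) :
    ∃ c₇ > (0 : ℝ), ∃ Q₀ : ℕ, ∀ Q : ℕ, Q₀ < Q →
      ∀ a₁ b₁ a₂ b₂ : ℝ,
        Set.Icc a₁ b₁ ⊆ Set.Icc (-(1/2) : ℝ) (1/2) →
        Set.Icc a₂ b₂ ⊆ Set.Icc (-(1/2) : ℝ) (1/2) →
        b₁ - a₁ = (Q : ℝ) ^ (-κ₁) →
        b₂ - a₂ = (Q : ℝ) ^ (-κ₂) →
        (∀ x ∈ Set.Icc a₁ b₁, ∀ y ∈ Set.Icc a₂ b₂, ε < |x - y|) →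
        ∃ S : Finset (ℝ × ℝ),
          (∀ q ∈ S, q.1 ∈ Set.Icc a₁ b₁ ∧ q.2 ∈ Set.Icc a₂ b₂ ∧
            IsAlgIntPoint n (Q : ℤ) q.1 q.2) ∧
          c₇ * (Q : ℝ) ^ ((n : ℝ) - κ₁ - κ₂) ≤ (S.card : ℝ) := by
  obtain ⟨k, rfl⟩ : ∃ k, n = k + 2 := ⟨n - 2, by omega⟩
  have hk : 1 ≤ k := by omega
  obtain ⟨δ, hδ⟩ : ∃ δ, δ = min ε 1 := ⟨_, rfl⟩
  have hδ0 : 0 < δ := by rw [hδ]; exact lt_min hε one_pos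
  have hδ1 : δ ≤ 1 := by rw [hδ]; exact min_le_right _ _
  have hδε : δ ≤ ε := by rw [hδ]; exact min_le_left _ _
  obtain ⟨ν, hν⟩ : ∃ ν : ℝ, ν = ((k + 2 : ℕ) : ℝ) := ⟨_, rfl⟩
  have hν1 : 1 ≤ ν := by rw [hν]; exact_mod_cast (by omega : 1 ≤ k + 2)
  have hν0 : 0 < ν := by linarith
  obtain ⟨η, hη⟩ : ∃ η : ℝ, η = δ ^ 2 / (1000 * ν ^ 2) := ⟨_, rfl⟩
  have hη0 : 0 < η := by rw [hη]; positivity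
  have hην : η * ν ^ 2 = δ ^ 2 / 1000 := by rw [hη]; field_simp
  have hηδ : η ≤ δ ^ 2 / 1000 := by
    rw [← hην]; exact le_mul_of_one_le_right hη0.le (one_le_pow₀ hν1)
  have hδ2 : 0 < δ ^ 2 := by positivity
  have hbig : ∀ᶠ Q : ℕ in Filter.atTop, max (1 / η) (1000 * ν / δ ^ 2) ≤ (Q : ℝ) :=
    tendsto_natCast_atTop_atTop.eventually_ge_atTop _
  obtain ⟨Q₀, hQ₀⟩ := Filter.eventually_atTop.1
    ((Filter.eventually_ge_atTop 100).and (hbig.and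
      ((aux_rpow_big κ₁ (max (1 / η) (1000 / δ ^ 2)) (by linarith)).and
      ((aux_rpow_big κ₂ (max (1 / η) (1000 / δ ^ 2)) (by linarith)).and
      ((aux_rpow_small κ₁ (δ ^ 2 / 10) hκ₁ (by positivity)).and
      (aux_rpow_small κ₂ (δ ^ 2 / 10) hκ₂ (by positivity)))))))
  refine ⟨(η / 2) ^ (k + 2), by positivity, Q₀, ?_⟩
  intro Q hQ a₁ b₁ a₂ b₂ hI₁ hI₂ hl₁ hl₂ hsep
  obtain ⟨h100, hQb, hY₁, hY₂, hs₁, hs₂⟩ := hQ₀ Q hQ.le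
  have hQpos : (0 : ℝ) < Q := by exact_mod_cast (by omega : 0 < Q)
  obtain ⟨Y₁, hY₁d⟩ : ∃ Y, Y = (Q : ℝ) ^ (1 - κ₁) := ⟨_, rfl⟩
  obtain ⟨Y₂, hY₂d⟩ : ∃ Y, Y = (Q : ℝ) ^ (1 - κ₂) := ⟨_, rfl⟩
  have hYe₁ : Q * (Q : ℝ) ^ (-κ₁) = Y₁ := by
    rw [hY₁d, sub_eq_add_neg, Real.rpow_add hQpos, Real.rpow_one]
  have hYe₂ : Q * (Q : ℝ) ^ (-κ₂) = Y₂ := by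
    rw [hY₂d, sub_eq_add_neg, Real.rpow_add hQpos, Real.rpow_one]
  rw [← hY₁d] at hY₁
  rw [← hY₂d] at hY₂
  obtain ⟨hQ1, hQ2⟩ := max_le_iff.1 hQb
  obtain ⟨hY11, hY12⟩ := max_le_iff.1 hY₁
  obtain ⟨hY21, hY22⟩ := max_le_iff.1 hY₂
  rw [div_le_iff₀ hη0] at hQ1 hY11 hY21
  rw [div_le_iff₀ hδ2] at hQ2 hY12 hY22
  have hY10 : 0 < Y₁ := by rw [hY₁d]; positivity
  have hY20 : 0 < Y₂ := by rw [hY₂d]; positivity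
  obtain ⟨N, hN⟩ : ∃ N, N = ⌊Q * η⌋₊ := ⟨_, rfl⟩
  obtain ⟨M₁, hM₁⟩ : ∃ N, N = ⌊Y₁ * η⌋₊ := ⟨_, rfl⟩
  obtain ⟨M₂, hM₂⟩ : ∃ N, N = ⌊Y₂ * η⌋₊ := ⟨_, rfl⟩
  have hNl := aux_floor _ hQ1
  have hM₁l := aux_floor _ hY11
  have hM₂l := aux_floor _ hY21
  have hNu := Nat.floor_le (by positivity : 0 ≤ Q * η)
  have hM₁u := Nat.floor_le (by positivity : 0 ≤ Y₁ * η)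
  have hM₂u := Nat.floor_le (by positivity : 0 ≤ Y₂ * η)
  rw [← hN] at hNl hNu
  rw [← hM₁] at hM₁l hM₁u
  rw [← hM₂] at hM₂l hM₂u
  obtain ⟨hw₁, hw₁m, hE₁⟩ := aux_mid a₁ b₁ _ (by positivity) hl₁ hI₁
  obtain ⟨hw₂, hw₂m, hE₂⟩ := aux_mid a₂ b₂ _ (by positivity) hl₂ hI₂
  have hw := hδε.trans_lt (hsep _ hw₁m _ hw₂m)
  obtain ⟨w₁, hw₁d⟩ : ∃ w, w = (a₁ + b₁) / 2 := ⟨_, rfl⟩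
  obtain ⟨w₂, hw₂d⟩ : ∃ w, w = (a₂ + b₂) / 2 := ⟨_, rfl⟩
  rw [← hw₁d] at hw₁ hw hE₁
  rw [← hw₂d] at hw₂ hw hE₂
  have hNc : ((k + 2 : ℕ) : ℝ) + 2 * ((k + 2 : ℕ) : ℝ) ^ 2 * N ≤ δ ^ 2 / 100 * Q := by
    rw [← hν]
    have h1 : ν ^ 2 * N ≤ ν ^ 2 * (Q * η) := by gcongr
    have h2 : ν ^ 2 * (Q * η) = δ ^ 2 / 1000 * Q := by rw [← hην]; ring
    have h3 : 0 < δ ^ 2 * Q := by positivity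
    linarith
  have hMc₁ : (11 * M₁ + 5 : ℝ) ≤ δ ^ 2 * Q / 20 * ((Q : ℝ) ^ (-κ₁) / 2) := by
    have h1 : δ ^ 2 * Q / 20 * ((Q : ℝ) ^ (-κ₁) / 2) = δ ^ 2 / 40 * Y₁ := by rw [← hYe₁]; ring
    have h2 : Y₁ * η ≤ Y₁ * (δ ^ 2 / 1000) := by gcongr
    have h3 : 0 < δ ^ 2 * Y₁ := by positivity
    rw [h1]; linarith
  have hMc₂ : (11 * M₂ + 5 : ℝ) ≤ δ ^ 2 * Q / 20 * ((Q : ℝ) ^ (-κ₂) / 2) := by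
    have h1 : δ ^ 2 * Q / 20 * ((Q : ℝ) ^ (-κ₂) / 2) = δ ^ 2 / 40 * Y₂ := by rw [← hYe₂]; ring
    have h2 : Y₂ * η ≤ Y₂ * (δ ^ 2 / 1000) := by gcongr
    have h3 : 0 < δ ^ 2 * Y₂ := by positivity
    rw [h1]; linarith
  let ext : (Fin k → Fin N) → ℕ → ℕ := fun b j => if h : j < k then (b ⟨j, h⟩ : ℕ) else 0
  have hext : ∀ b j, ext b j ≤ N := by
    intro b j
    simp only [ext]
    split_ifs with h
    · exact (b ⟨j, h⟩).2.le
    · exact Nat.zero_le _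
  have build := fun p : Fin M₁ × Fin M₂ × (Fin k → Fin N) =>
    aux_build k hk δ hδ0 hδ1 Q N M₁ M₂ h100 w₁ w₂ ((Q : ℝ) ^ (-κ₁) / 2) ((Q : ℝ) ^ (-κ₂) / 2)
      hNc hw₁ hw₂ hw (by positivity) (by positivity) (by linarith) (by linarith) hMc₁ hMc₂
      p.1 p.2.1 p.1.2.le p.2.1.2.le (ext p.2.2) (hext p.2.2)
  choose e₀ e₁ α β hi hj hα hβ hPα hPβ hirr hcoef using build
  rw [hE₁] at hα
  rw [hE₂] at hβ
  have hinj : Function.Injective (fun p => (α p, β p)) := by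
    intro p q hpq
    have hαe : α p = α q := congrArg Prod.fst hpq
    have hm1 := aux_minpoly _ (polyOf_monic _ _) (hirr p) _ (hPα p)
    have hm2 := aux_minpoly _ (polyOf_monic _ _) (hirr q) _ (hPα q)
    rw [hαe, ← hm2] at hm1
    have hPe := map_injective _ (algebraMap ℤ ℚ).injective_int hm1
    have hp1 := hi p
    have hp2 := hj p
    rw [hPe] at hp1 hp2
    have q1 := aux_grid _ _ _ hp1 (hi q)
    have q2 := aux_grid _ _ _ hp2 (hj q)
    refine Prod.ext (Fin.ext q1) (Prod.ext (Fin.ext q2) ?_)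
    funext j
    have hc := congrArg (fun P => P.coeff ((j : ℕ) + 2)) hPe
    simp only [polyOf_coeff, if_pos (by omega : (j : ℕ) + 2 < k + 2), coefFn] at hc
    have hc' : ext p.2.2 j = ext q.2.2 j := by omega
    simp only [ext, dif_pos j.2] at hc'
    exact Fin.ext hc'
  refine ⟨Finset.univ.map ⟨_, hinj⟩, ?_, ?_⟩
  · intro x hx
    obtain ⟨p, -, rfl⟩ := Finset.mem_map.1 hx
    refine ⟨hα p, hβ p, ?_, _, polyOf_monic _ _, polyOf_natDegree _ _, hirr p, hcoef p,
      hPα p, hPβ p⟩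
    intro h
    have := hsep _ (hα p) _ (hβ p)
    simp only [Function.Embedding.coeFn_mk] at h
    rw [h, sub_self, abs_zero] at this
    linarith
  · rw [Finset.card_map, Finset.card_univ]
    simp only [Fintype.card_prod, Fintype.card_fin, Fintype.card_fun]
    push_cast
    have h1 : (Q : ℝ) ^ ((k : ℝ) + 2 - κ₁ - κ₂) = Y₁ * (Y₂ * (Q : ℝ) ^ k) := by
      rw [hY₁d, hY₂d, ← Real.rpow_natCast (Q : ℝ) k, ← Real.rpow_add hQpos, ← Real.rpow_add hQpos]
      congr 1; ring
    rw [h1]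
    calc (η / 2) ^ (k + 2) * (Y₁ * (Y₂ * (Q : ℝ) ^ k))
        = (Y₁ * η / 2) * ((Y₂ * η / 2) * (Q * η / 2) ^ k) := by
          rw [show (Q : ℝ) * η / 2 = Q * (η / 2) by ring, mul_pow]; ring
      _ ≤ M₁ * (M₂ * (N : ℝ) ^ k) := by gcongr
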